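/- For every z ∈ ℂ with z ∉ Λ and z + 2ℓ ∉ Λ, the quasi-periodicity relations f₂(z + 2ℓ) = f₂(z) + (2π/δ)·ζ₂(z) + (π/δ)² and f₂(z + 2iδ) = f₂(z) hold. -/

import Mathlib

open Complex Filter MeasureTheory Finset

noncomputable section

/-- The period lattice with half-periods `ℓ` and `iδ`. -/
def Lambda (ℓ δ : ℝ) : Set ℂ :=
  {z | ∃ n m : ℤ, z = 2 * (n : ℂ) * (ℓ : ℂ) + 2 * (m : ℂ) * ((δ : ℂ) * Complex.I)}

/-- The nonzero lattice points. -/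
def latticePts (ℓ δ : ℝ) : Set ℂ := Lambda ℓ δ \ {0}

/-- Weierstrass ℘-function with half-periods `ℓ`, `iδ`. -/
def wP (ℓ δ : ℝ) (z : ℂ) : ℂ :=
  1 / z ^ 2 + ∑' ω : latticePts ℓ δ, (1 / (z - (ω : ℂ)) ^ 2 - 1 / (ω : ℂ) ^ 2)

/-- Weierstrass ζ-function with half-periods `ℓ`, `iδ`. -/
def wZeta (ℓ δ : ℝ) (z : ℂ) : ℂ :=
  1 / z + ∑' ω : latticePts ℓ δ, (1 / (z - (ω : ℂ)) + 1 / (ω : ℂ) + z / (ω : ℂ) ^ 2)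

def zeta2 (ℓ δ : ℝ) (z : ℂ) : ℂ :=
  wZeta ℓ δ z - (wZeta ℓ δ ((δ : ℂ) * Complex.I) / ((δ : ℂ) * Complex.I)) * z

def wp2 (ℓ δ : ℝ) (z : ℂ) : ℂ :=
  wP ℓ δ z + wZeta ℓ δ ((δ : ℂ) * Complex.I) / ((δ : ℂ) * Complex.I)

def f2 (ℓ δ : ℝ) (z : ℂ) : ℂ := (zeta2 ℓ δ z) ^ 2 - wp2 ℓ δ z

def zeta1 (ℓ δ : ℝ) (z : ℂ) : ℂ :=
  wZeta ℓ δ z - (wZeta ℓ δ (ℓ : ℂ) / (ℓ : ℂ)) * z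

/-- Bilinear dot product on `ℂ³` (no conjugation). -/
def dot3 (s t : Fin 3 → ℂ) : ℂ := s 0 * t 0 + s 1 * t 1 + s 2 * t 2

/-- Cross product on `ℂ³`. -/
def cross3 (s t : Fin 3 → ℂ) : Fin 3 → ℂ :=
  ![s 1 * t 2 - s 2 * t 1, s 2 * t 0 - s 0 * t 2, s 0 * t 1 - s 1 * t 0]

/-- The principal-value integral operator `T`. -/
def pvT (ℓ δ : ℝ) (f : ℝ → Fin 3 → ℂ) (x : ℝ) : Fin 3 → ℂ := fun i =>
  (1 / (Real.pi : ℂ)) * limUnder (nhdsWithin (0 : ℝ) (Set.Ioi 0)) (fun ε : ℝ =>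
    ∫ y in {y : ℝ | y ∈ Set.Icc (-ℓ) ℓ ∧ ε ≤ |y - x|},
      zeta1 ℓ δ ((y : ℂ) - (x : ℂ)) * f y i)

/-- The integral operator `T̃`. -/
def tilT (ℓ δ : ℝ) (f : ℝ → Fin 3 → ℂ) (x : ℝ) : Fin 3 → ℂ := fun i =>
  (1 / (Real.pi : ℂ)) * ∫ y in Set.Icc (-ℓ) ℓ,
      zeta1 ℓ δ ((y : ℂ) - (x : ℂ) + (δ : ℂ) * Complex.I) * f y i


/-- lattice point with coordinates `x` -/
def wpt (L : PeriodPair) (x : ℤ × ℤ) : ℂ := x.1 * L.ω₁ + x.2 * L.ω₂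

def zterm (L : PeriodPair) (z : ℂ) (x : ℤ × ℤ) : ℂ :=
  1 / (z - wpt L x) + 1 / wpt L x + z / (wpt L x) ^ 2

def ZZ (L : PeriodPair) (z : ℂ) : ℂ := ∑' x : ℤ × ℤ, zterm L z x

lemma summable_zterm (L : PeriodPair) (z : ℂ) : Summable (zterm L z) := by
  have h : Summable (fun l : L.lattice => 1 / (z - (l : ℂ)) + 1 / (l : ℂ) + z / (l : ℂ) ^ 2) := by
    have hs := (ZLattice.summable_norm_pow_inv L.lattice 3 (by simp)).mul_left (2 * ‖z‖ ^ 2)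
    refine Summable.of_norm_bounded_eventually hs ?_
    have hfin : (Metric.closedBall (0 : L.lattice) (2 * ‖z‖)).Finite :=
      isCompact_iff_finite.mp (isCompact_closedBall (0 : L.lattice) (2 * ‖z‖))
    refine hfin.subset ?_
    intro l hl
    by_contra hlt
    apply hl
    change ‖1 / (z - (l : ℂ)) + 1 / (l : ℂ) + z / (l : ℂ) ^ 2‖ ≤ 2 * ‖z‖ ^ 2 * ‖l‖⁻¹ ^ 3
    simp only [Metric.mem_closedBall, dist_zero_right, not_le] at hlt
    have hn : ‖l‖ = ‖(l : ℂ)‖ := rfl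
    rw [hn] at hlt ⊢
    generalize (l : ℂ) = w at hlt ⊢
    have hw : 0 < ‖w‖ := lt_of_le_of_lt (by positivity) hlt
    have hw0 : w ≠ 0 := norm_pos_iff.mp hw
    have hd : ‖w‖ / 2 ≤ ‖z - w‖ := by
      have := norm_sub_norm_le w z
      rw [norm_sub_rev] at this
      linarith
    have hd0 : z - w ≠ 0 := norm_pos_iff.mp (by linarith)
    have : 1 / (z - w) + 1 / w + z / w ^ 2 = z ^ 2 / (w ^ 2 * (z - w)) := by
      field_simp
      ring
    rw [this, norm_div, norm_mul, norm_pow, norm_pow]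
    calc ‖z‖ ^ 2 / (‖w‖ ^ 2 * ‖z - w‖) ≤ ‖z‖ ^ 2 / (‖w‖ ^ 2 * (‖w‖ / 2)) := by gcongr
      _ = _ := by field_simp
  have := (L.latticeEquivProd.symm.toEquiv.summable_iff).mpr h
  refine this.congr fun x => ?_
  simp only [zterm, wpt, ← L.latticeEquiv_symm_apply]
  rfl

lemma ZZ_neg (L : PeriodPair) (z : ℂ) : ZZ L (-z) = - ZZ L z := by
  unfold ZZ
  rw [← tsum_neg, ← (Equiv.neg (ℤ × ℤ)).tsum_eq]
  congr 1
  ext x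
  have : wpt L (-x) = - wpt L x := by simp [wpt]; ring
  simp only [Equiv.neg_apply, zterm, this]
  rw [show -z - -wpt L x = -(z - wpt L x) by ring, div_neg, div_neg]
  ring

lemma tele {a : ℤ → ℂ} {l l' : ℂ} (h : Summable fun n => a (n - 1) - a n)
    (h1 : Tendsto a atTop (nhds l)) (h2 : Tendsto a atBot (nhds l')) :
    ∑' n, (a (n - 1) - a n) = l' - l := by
  have h3 := h.hasSum.comp (tendsto_Ico_neg (R := ℤ))
  refine tendsto_nhds_unique h3 ?_
  have key : ∀ N : ℕ, ∑ n ∈ Finset.Ico (-(N : ℤ)) N, (a (n - 1) - a n)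
      = a (-(N : ℤ) - 1) - a ((N : ℤ) - 1) := by
    intro N
    induction N with
    | zero => simp
    | succ k ih =>
      have : Finset.Ico (-((k + 1 : ℕ) : ℤ)) ((k + 1 : ℕ) : ℤ)
          = insert (-(k : ℤ) - 1) (insert (k : ℤ) (Finset.Ico (-(k : ℤ)) k)) := by
        ext x; simp; omega
      rw [this, Finset.sum_insert (by simp), Finset.sum_insert (by simp), ih]
      push_cast
      rw [show -((k : ℤ) + 1) - 1 = -(k : ℤ) - 1 - 1 by ring, show (k : ℤ) + 1 - 1 = k by ring]
      ring
  have e : ((fun s : Finset ℤ => ∑ n ∈ s, (a (n - 1) - a n)) ∘ fun N : ℕ => Finset.Ico (-(N : ℤ)) N)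
      = fun N : ℕ => a (-(N : ℤ) - 1) - a ((N : ℤ) - 1) := funext key
  change Tendsto ((fun s : Finset ℤ => ∑ n ∈ s, (a (n - 1) - a n)) ∘ fun N : ℕ => Finset.Ico (-(N : ℤ)) N) _ _
  rw [e]
  have t : Tendsto (fun N : ℕ => (N : ℤ)) atTop atTop := tendsto_natCast_atTop_atTop
  refine (h2.comp ?_).sub (h1.comp ?_)
  · exact tendsto_atBot_add_const_right _ _ (tendsto_neg_atTop_atBot.comp t)
  · simp only [sub_eq_add_neg]
    exact tendsto_atTop_add_const_right _ _ t

lemma tele2 (f : ℤ × ℤ → ℂ) (h : Summable f) (a : ℤ → ℤ → ℂ)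
    (he : ∀ m n, f (m, n) = a m (n - 1) - a m n)
    (h0 : ∀ m, Tendsto (a m) cofinite (nhds 0)) :
    ∑' x, f x = 0 := by
  rw [Summable.tsum_prod h]
  convert tsum_zero with m
  have hs := h.prod_factor m
  simp only [he] at hs ⊢
  have := tele hs (l := 0) (l' := 0)
    ((h0 m).mono_left (by rw [Int.cofinite_eq]; exact le_sup_right))
    ((h0 m).mono_left (by rw [Int.cofinite_eq]; exact le_sup_left))
  rw [this, sub_zero]

lemma tele2' (f : ℤ × ℤ → ℂ) (h : Summable f) (a : ℤ → ℤ → ℂ)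
    (he : ∀ m n, f (n, m) = a m (n - 1) - a m n)
    (h0 : ∀ m, Tendsto (a m) cofinite (nhds 0)) :
    ∑' x, f x = 0 := by
  rw [← (Equiv.prodComm ℤ ℤ).tsum_eq]
  exact tele2 (fun x => f (Equiv.prodComm ℤ ℤ x)) (((Equiv.prodComm ℤ ℤ).summable_iff).mpr h) a he h0

lemma tendsto_inv_lin (p z : ℂ) (hp : p ≠ 0) :
    Tendsto (fun n : ℤ => 1 / (z - n * p)) cofinite (nhds 0) := by
  simp only [one_div]
  refine tendsto_inv₀_cobounded.comp ?_
  have h1 : Tendsto (fun n : ℤ => (n : ℂ)) cofinite (Bornology.cobounded ℂ) := by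
    rw [← tendsto_norm_atTop_iff_cobounded]
    have := tendsto_norm_cocompact_atTop.comp Int.tendsto_coe_cofinite
    refine this.congr fun n => ?_
    simp
  rw [← tendsto_norm_atTop_iff_cobounded] at h1 ⊢
  have h2 : Tendsto (fun n : ℤ => ‖(n : ℂ)‖ * ‖p‖ + (-‖z‖)) cofinite atTop :=
    tendsto_atTop_add_const_right _ _ (h1.atTop_mul_const (norm_pos_iff.mpr hp))
  refine tendsto_atTop_mono (fun n => ?_) h2
  have := norm_sub_norm_le ((n : ℂ) * p) z
  rw [norm_sub_rev, norm_mul] at this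
  linarith

lemma w1_ne (L : PeriodPair) : L.ω₁ ≠ 0 := by simpa using L.indep.ne_zero 0
lemma w2_ne (L : PeriodPair) : L.ω₂ ≠ 0 := by simpa using L.indep.ne_zero 1

lemma zterm_diff1 (L : PeriodPair) (z : ℂ) (x : ℤ × ℤ) :
    zterm L (z + L.ω₁) x - zterm L z x =
      1 / (z - wpt L (x.1 - 1, x.2)) - 1 / (z - wpt L x) + L.ω₁ / (wpt L x) ^ 2 := by
  have : z + L.ω₁ - wpt L x = z - wpt L (x.1 - 1, x.2) := by simp [wpt]; ring
  simp only [zterm, this]; ring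

lemma zterm_diff2 (L : PeriodPair) (z : ℂ) (x : ℤ × ℤ) :
    zterm L (z + L.ω₂) x - zterm L z x =
      1 / (z - wpt L (x.1, x.2 - 1)) - 1 / (z - wpt L x) + L.ω₂ / (wpt L x) ^ 2 := by
  have : z + L.ω₂ - wpt L x = z - wpt L (x.1, x.2 - 1) := by simp [wpt]; ring
  simp only [zterm, this]; ring

lemma quasi1 (L : PeriodPair) (z y : ℂ) :
    ZZ L (z + L.ω₁) - ZZ L z = ZZ L (y + L.ω₁) - ZZ L y := by
  rw [← sub_eq_zero]
  have s1 := (summable_zterm L (z + L.ω₁)).sub (summable_zterm L z)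
  have s2 := (summable_zterm L (y + L.ω₁)).sub (summable_zterm L y)
  have e := (s1.tsum_sub s2)
  rw [(summable_zterm L (z + L.ω₁)).tsum_sub (summable_zterm L z),
    (summable_zterm L (y + L.ω₁)).tsum_sub (summable_zterm L y)] at e
  unfold ZZ
  rw [← e]
  refine tele2' _ (s1.sub s2)
    (fun m n : ℤ => 1 / (z - wpt L (n, m)) - 1 / (y - wpt L (n, m))) ?_ fun m => ?_
  · intro m n
    rw [zterm_diff1, zterm_diff1]
    ring
  have t := (tendsto_inv_lin L.ω₁ (z - m * L.ω₂) (w1_ne L)).sub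
    (tendsto_inv_lin L.ω₁ (y - m * L.ω₂) (w1_ne L))
  rw [sub_zero] at t
  refine t.congr fun n => ?_
  simp only [wpt]
  congr 2 <;> ring

lemma quasi2 (L : PeriodPair) (z y : ℂ) :
    ZZ L (z + L.ω₂) - ZZ L z = ZZ L (y + L.ω₂) - ZZ L y := by
  rw [← sub_eq_zero]
  have s1 := (summable_zterm L (z + L.ω₂)).sub (summable_zterm L z)
  have s2 := (summable_zterm L (y + L.ω₂)).sub (summable_zterm L y)
  have e := (s1.tsum_sub s2)
  rw [(summable_zterm L (z + L.ω₂)).tsum_sub (summable_zterm L z),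
    (summable_zterm L (y + L.ω₂)).tsum_sub (summable_zterm L y)] at e
  unfold ZZ
  rw [← e]
  refine tele2 _ (s1.sub s2)
    (fun m n : ℤ => 1 / (z - wpt L (m, n)) - 1 / (y - wpt L (m, n))) ?_ fun m => ?_
  · intro m n
    rw [zterm_diff2, zterm_diff2]
    ring
  have t := (tendsto_inv_lin L.ω₂ (z - m * L.ω₁) (w2_ne L)).sub
    (tendsto_inv_lin L.ω₂ (y - m * L.ω₁) (w2_ne L))
  rw [sub_zero] at t
  refine t.congr fun n => ?_
  simp only [wpt]
  congr 2 <;> ring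

lemma quasi1' (L : PeriodPair) (z : ℂ) : ZZ L (z + L.ω₁) = ZZ L z + 2 * ZZ L (L.ω₁ / 2) := by
  have := quasi1 L z (-(L.ω₁ / 2))
  rw [ZZ_neg, show -(L.ω₁ / 2) + L.ω₁ = L.ω₁ / 2 by ring] at this
  linear_combination this

lemma quasi2' (L : PeriodPair) (z : ℂ) : ZZ L (z + L.ω₂) = ZZ L z + 2 * ZZ L (L.ω₂ / 2) := by
  have := quasi2 L z (-(L.ω₂ / 2))
  rw [ZZ_neg, show -(L.ω₂ / 2) + L.ω₂ = L.ω₂ / 2 by ring] at this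
  linear_combination this

lemma summable_fibre (L : PeriodPair) (z y : ℂ) :
    Summable fun n : ℤ => 1 / (z - n * L.ω₁) - 1 / (y - n * L.ω₁) := by
  have s := (summable_zterm L z).sub (summable_zterm L y)
  have s' := (((Equiv.prodComm ℤ ℤ).summable_iff).mpr s).prod_factor 0
  have s2 : Summable fun n : ℤ => (z - y) / L.ω₁ ^ 2 * (1 / (n : ℂ) ^ 2) := by
    refine Summable.mul_left _ ?_
    have := (Real.summable_one_div_int_pow (p := 2)).mpr (by norm_num)
    have := Complex.ofRealCLM.summable this
    simpa using this
  refine (s'.sub s2).congr fun n => ?_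
  simp [zterm, wpt]
  ring

lemma cot_diff (L : PeriodPair) (z y : ℂ) (hz : z / L.ω₁ ∈ Complex.integerComplement)
    (hy : y / L.ω₁ ∈ Complex.integerComplement) :
    ∑' n : ℤ, L.ω₁ * (1 / (z - n * L.ω₁) - 1 / (y - n * L.ω₁)) =
      Real.pi * Complex.cot (Real.pi * (z / L.ω₁)) - Real.pi * Complex.cot (Real.pi * (y / L.ω₁)) := by
  have s := (summable_fibre L z y).mul_left L.ω₁
  have hw := w1_ne L
  have e : ∀ n : ℤ, L.ω₁ * (1 / (z - n * L.ω₁) - 1 / (y - n * L.ω₁)) =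
      1 / (z / L.ω₁ - n) - 1 / (y / L.ω₁ - n) := by
    intro n
    rw [show z - n * L.ω₁ = L.ω₁ * (z / L.ω₁ - n) by field_simp,
      show y - n * L.ω₁ = L.ω₁ * (y / L.ω₁ - n) by field_simp]
    simp only [one_div, mul_inv]
    rw [mul_sub, mul_inv_cancel_left₀ hw, mul_inv_cancel_left₀ hw]
  simp only [e] at s ⊢
  have h1 := s.hasSum.nat_add_neg
  have h2 := h1.summable.hasSum
  have h3 := h1.tsum_eq
  rw [h1.summable.tsum_eq_zero_add] at h3
  have c1 := cot_series_rep' hz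
  have c2 := cot_series_rep' hy
  have c3 := (summable_cotTerm hz).tsum_sub (summable_cotTerm hy)
  simp only [cotTerm] at c3
  rw [← c1, ← c2] at c3
  have e3 : ∀ n : ℕ, (1 / (z / L.ω₁ - ((n + 1 : ℕ) : ℤ)) - 1 / (y / L.ω₁ - ((n + 1 : ℕ) : ℤ))) +
      (1 / (z / L.ω₁ - ((-((n + 1 : ℕ) : ℤ) : ℤ) : ℂ)) - 1 / (y / L.ω₁ - ((-((n + 1 : ℕ) : ℤ) : ℤ) : ℂ)))
      = 1 / (z / L.ω₁ - (n + 1)) + 1 / (z / L.ω₁ + (n + 1)) -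
       (1 / (y / L.ω₁ - (n + 1)) + 1 / (y / L.ω₁ + (n + 1))) := by
    intro n
    push_cast
    rw [sub_neg_eq_add, sub_neg_eq_add]
    ring
  rw [tsum_congr e3, c3] at h3
  simp at h3 ⊢
  linear_combination -h3

lemma cot_neg' (z : ℂ) : Complex.cot (-z) = - Complex.cot z := by
  simp [Complex.cot, div_neg]

lemma cot_lim {α : Type*} {F : Filter α} (u : α → ℂ) (h : Tendsto (fun n => (u n).im) F atTop) :
    Tendsto (fun n => Complex.cot (Real.pi * u n)) F (nhds (-Complex.I)) := by
  have he : Tendsto (fun n => Complex.exp (2 * Real.pi * Complex.I * u n)) F (nhds 0) := by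
    rw [tendsto_zero_iff_norm_tendsto_zero]
    simp only [Complex.norm_exp]
    refine Real.tendsto_exp_atBot.comp ?_
    have : ∀ n, (2 * Real.pi * Complex.I * u n).re = -(2 * Real.pi * (u n).im) := by
      intro n; simp
    simp only [this]
    exact tendsto_neg_atTop_atBot.comp (h.const_mul_atTop (by positivity))
  simp only [Complex.cot_pi_eq_exp_ratio]
  have : -Complex.I = (0 + 1) / (Complex.I * (1 - 0)) := by simp
  rw [this]
  exact (he.add_const 1).div ((tendsto_const_nhds.sub he).const_mul _) (by simp)

lemma tele3 (f : ℤ × ℤ → ℂ) (h : Summable f) (c : ℤ → ℂ) (l l' : ℂ)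
    (hin : ∀ m, ∑' n, f (n, m) = -(c (m - 1) - c m))
    (h1 : Tendsto c atTop (nhds l)) (h2 : Tendsto c atBot (nhds l')) :
    ∑' x, f x = l - l' := by
  have h' : Summable (fun x => f (Equiv.prodComm ℤ ℤ x)) :=
    ((Equiv.prodComm ℤ ℤ).summable_iff).mpr h
  have s : Summable fun m => ∑' n, f (n, m) := h'.prod
  rw [← (Equiv.prodComm ℤ ℤ).tsum_eq, h'.tsum_prod]
  change ∑' m, ∑' n, f (n, m) = _
  simp only [hin] at s ⊢
  rw [tsum_neg, tele (summable_neg_iff.mp s) h1 h2]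
  ring

lemma legendre (L : PeriodPair) (hpos : 0 < (L.ω₂ / L.ω₁).im) (z : ℂ) (hz : z ∉ L.lattice) :
    L.ω₂ * (ZZ L (z + L.ω₁) - ZZ L z) - L.ω₁ * (ZZ L (z + L.ω₂) - ZZ L z)
      = 2 * Real.pi * Complex.I := by
  have s0 := summable_zterm L z
  have s1 := (summable_zterm L (z + L.ω₁)).sub s0
  have s2 := (summable_zterm L (z + L.ω₂)).sub s0
  unfold ZZ
  rw [← (summable_zterm L (z + L.ω₁)).tsum_sub s0, ← (summable_zterm L (z + L.ω₂)).tsum_sub s0,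
    ← tsum_mul_left, ← tsum_mul_left, ← (s1.mul_left _).tsum_sub (s2.mul_left _)]
  have s3 := (s1.mul_left L.ω₂).sub (s2.mul_left L.ω₁)
  have hw := w1_ne L
  let c : ℤ → ℂ := fun m => Real.pi * Complex.cot (Real.pi * ((z - m * L.ω₂) / L.ω₁))
  have hc : ∀ m : ℤ, (z - m * L.ω₂) / L.ω₁ ∈ Complex.integerComplement := by
    rintro m ⟨n, hn⟩
    apply hz
    rw [PeriodPair.mem_lattice]
    refine ⟨n, m, ?_⟩
    rw [hn]; field_simp; ring
  have hin : ∀ m : ℤ, ∑' n : ℤ, (L.ω₂ * (zterm L (z + L.ω₁) (n, m) - zterm L z (n, m)) -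
      L.ω₁ * (zterm L (z + L.ω₂) (n, m) - zterm L z (n, m))) = - (c (m - 1) - c m) := by
    intro m
    have e : ∀ n : ℤ, L.ω₂ * (zterm L (z + L.ω₁) (n, m) - zterm L z (n, m)) -
      L.ω₁ * (zterm L (z + L.ω₂) (n, m) - zterm L z (n, m)) =
      L.ω₂ * ((fun k : ℤ => 1 / (z - m * L.ω₂ - k * L.ω₁)) (n - 1)
         - (fun k : ℤ => 1 / (z - m * L.ω₂ - k * L.ω₁)) n) -
      L.ω₁ * (1 / (z - (m - 1 : ℤ) * L.ω₂ - n * L.ω₁) - 1 / (z - m * L.ω₂ - n * L.ω₁)) := by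
      intro n
      simp only [zterm_diff1, zterm_diff2, wpt]
      rw [show z - m * L.ω₂ - (n - 1 : ℤ) * L.ω₁ = z - ((n - 1 : ℤ) * L.ω₁ + m * L.ω₂) by ring,
        show z - m * L.ω₂ - n * L.ω₁ = z - (n * L.ω₁ + m * L.ω₂) by ring,
        show z - (m - 1 : ℤ) * L.ω₂ - n * L.ω₁ = z - (n * L.ω₁ + (m - 1 : ℤ) * L.ω₂) by ring]
      ring
    rw [tsum_congr e]
    have f1 : Summable fun n : ℤ => ((fun k : ℤ => 1 / (z - m * L.ω₂ - k * L.ω₁)) (n - 1)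
         - (fun k : ℤ => 1 / (z - m * L.ω₂ - k * L.ω₁)) n) := by
      refine (summable_fibre L (z - m * L.ω₂ + L.ω₁) (z - m * L.ω₂)).congr fun n => ?_
      rw [show z - m * L.ω₂ + L.ω₁ - n * L.ω₁ = z - m * L.ω₂ - (n - 1 : ℤ) * L.ω₁ by push_cast; ring]
    have f2 := (summable_fibre L (z - (m - 1 : ℤ) * L.ω₂) (z - m * L.ω₂)).mul_left L.ω₁
    have t := tendsto_inv_lin L.ω₁ (z - m * L.ω₂) hw
    rw [Int.cofinite_eq] at t
    have t0 := tele (a := fun k : ℤ => 1 / (z - m * L.ω₂ - k * L.ω₁)) f1 (t.mono_left le_sup_right) (t.mono_left le_sup_left)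
    have t1 := cot_diff L _ _ (hc (m - 1)) (hc m)
    have t2 := (f1.mul_left L.ω₂).tsum_sub f2
    rw [tsum_mul_left, t0, t1] at t2
    refine t2.trans ?_
    simp only [c]; ring
  have im : ∀ m : ℤ, ((z - m * L.ω₂) / L.ω₁).im = (z / L.ω₁).im + (-(m : ℝ)) * (L.ω₂ / L.ω₁).im := by
    intro m
    rw [show (z - m * L.ω₂) / L.ω₁ = z / L.ω₁ + ((-(m : ℝ) : ℝ) : ℂ) * (L.ω₂ / L.ω₁) by
      push_cast; ring, Complex.add_im, Complex.im_ofReal_mul]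
  have l1 : Tendsto c atBot (nhds (Real.pi * -Complex.I)) := by
    refine Tendsto.const_mul _ (cot_lim _ ?_)
    simp only [im]
    refine tendsto_atTop_add_const_left _ _ (Tendsto.atTop_mul_const hpos ?_)
    exact tendsto_neg_atBot_atTop.comp (tendsto_intCast_atBot_iff.mpr tendsto_id)
  have l2 : Tendsto c atTop (nhds (Real.pi * Complex.I)) := by
    have : c = fun m : ℤ => Real.pi * -Complex.cot (Real.pi * (-((z - m * L.ω₂) / L.ω₁))) := by
      ext m; rw [mul_neg (Real.pi : ℂ) (_ / _), cot_neg', neg_neg]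
    rw [this]
    refine Tendsto.const_mul _ ?_
    rw [← neg_neg Complex.I]
    refine (cot_lim _ ?_).neg
    simp only [Complex.neg_im, im, neg_add, neg_mul, neg_neg]
    refine tendsto_atTop_add_const_left _ _ (Tendsto.atTop_mul_const hpos ?_)
    exact tendsto_intCast_atTop_atTop
  rw [tele3 _ s3 c _ _ hin l2 l1]
  ring

def LL (ℓ δ : ℝ) (hℓ : 0 < ℓ) (hδ : 0 < δ) : PeriodPair where
  ω₁ := 2 * ℓ
  ω₂ := 2 * (δ * Complex.I)
  indep := by
    rw [LinearIndependent.pair_iff]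
    intro s t h
    have h1 := congrArg Complex.re h
    have h2 := congrArg Complex.im h
    simp at h1 h2
    exact ⟨h1.resolve_right hℓ.ne', h2.resolve_right hδ.ne'⟩

lemma Lambda_eq (ℓ δ : ℝ) (hℓ : 0 < ℓ) (hδ : 0 < δ) : Lambda ℓ δ = (LL ℓ δ hℓ hδ).lattice := by
  ext z
  simp only [Lambda, Set.mem_ofPred_eq, SetLike.mem_coe, PeriodPair.mem_lattice, LL]
  constructor
  · rintro ⟨n, m, rfl⟩; exact ⟨n, m, by ring⟩
  · rintro ⟨n, m, rfl⟩; exact ⟨n, m, by ring⟩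

lemma tsum_pts (ℓ δ : ℝ) (hℓ : 0 < ℓ) (hδ : 0 < δ) (f : ℂ → ℂ)
    (hf : Summable fun l : (LL ℓ δ hℓ hδ).lattice => f l) :
    f 0 + ∑' w : latticePts ℓ δ, f w = ∑' l : (LL ℓ δ hℓ hδ).lattice, f l := by
  have h1 : Summable (Set.indicator (Lambda ℓ δ) f) := by
    rw [Lambda_eq ℓ δ hℓ hδ, ← summable_subtype_iff_indicator]; exact hf
  have h2 : ∑' l : (LL ℓ δ hℓ hδ).lattice, f l = ∑' z, Set.indicator (Lambda ℓ δ) f z := by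
    rw [Lambda_eq ℓ δ hℓ hδ, ← _root_.tsum_subtype]; rfl
  rw [h2, _root_.tsum_subtype, h1.tsum_eq_add_tsum_ite 0]
  have h0 : (0 : ℂ) ∈ Lambda ℓ δ := ⟨0, 0, by simp⟩
  rw [Set.indicator_of_mem h0]
  congr 2
  ext z
  by_cases h : z = 0 <;> by_cases h' : z ∈ Lambda ℓ δ <;>
    simp [latticePts, Set.indicator, Set.mem_sdiff, h, h']

lemma wP_eq (ℓ δ : ℝ) (hℓ : 0 < ℓ) (hδ : 0 < δ) (z : ℂ) :
    wP ℓ δ z = (LL ℓ δ hℓ hδ).weierstrassP z := by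
  have := tsum_pts ℓ δ hℓ hδ (fun w => 1 / (z - w) ^ 2 - 1 / w ^ 2)
    ((LL ℓ δ hℓ hδ).hasSum_weierstrassP z).summable
  rw [wP, PeriodPair.weierstrassP, ← this]
  simp

lemma wZeta_eq (ℓ δ : ℝ) (hℓ : 0 < ℓ) (hδ : 0 < δ) (z : ℂ) :
    wZeta ℓ δ z = ZZ (LL ℓ δ hℓ hδ) z := by
  set L := LL ℓ δ hℓ hδ with hL
  have e : ∀ l : L.lattice, zterm L z (L.latticeEquivProd.toEquiv l)
      = 1 / (z - (l : ℂ)) + 1 / (l : ℂ) + z / (l : ℂ) ^ 2 := by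
    intro l
    simp only [zterm, wpt, ← L.latticeEquiv_symm_apply]
    simp
  have s := (L.latticeEquivProd.toEquiv.summable_iff).mpr (summable_zterm L z)
  have := tsum_pts ℓ δ hℓ hδ (fun w => 1 / (z - w) + 1 / w + z / w ^ 2) (s.congr fun l => (e l))
  rw [ZZ, ← L.latticeEquivProd.toEquiv.tsum_eq, tsum_congr e, ← this, wZeta]
  simp

/-- Quasi-periodicity of `f₂`: `f₂(z+2ℓ) = f₂(z) + (2π/δ)ζ₂(z) + (π/δ)²` and
`f₂(z+2iδ) = f₂(z)`. -/
theorem f2_quasi_periodicity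
    (ℓ δ : ℝ) (hℓ : 0 < ℓ) (hδ : 0 < δ)
    (z : ℂ) (hz : z ∉ Lambda ℓ δ) (hz' : z + 2 * (ℓ : ℂ) ∉ Lambda ℓ δ) :
    f2 ℓ δ (z + 2 * (ℓ : ℂ))
      = f2 ℓ δ z + (2 * (Real.pi : ℂ) / (δ : ℂ)) * zeta2 ℓ δ z + ((Real.pi : ℂ) / (δ : ℂ)) ^ 2 ∧
    f2 ℓ δ (z + 2 * ((δ : ℂ) * Complex.I)) = f2 ℓ δ z := by
  have hδ' : (δ : ℂ) ≠ 0 := by exact_mod_cast hδ.ne'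
  have hℓ' : (ℓ : ℂ) ≠ 0 := by exact_mod_cast hℓ.ne'
  have hI := Complex.I_ne_zero
  have q1 : ∀ y, wZeta ℓ δ (y + 2 * ℓ) = wZeta ℓ δ y + 2 * wZeta ℓ δ ℓ := by
    intro y
    simp only [wZeta_eq ℓ δ hℓ hδ]
    have := quasi1' (LL ℓ δ hℓ hδ) y
    simpa [LL] using this
  have q2 : ∀ y, wZeta ℓ δ (y + 2 * (δ * Complex.I)) = wZeta ℓ δ y + 2 * wZeta ℓ δ (δ * Complex.I) := by
    intro y
    simp only [wZeta_eq ℓ δ hℓ hδ]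
    have := quasi2' (LL ℓ δ hℓ hδ) y
    simpa [LL] using this
  have p1 : wP ℓ δ (z + 2 * ℓ) = wP ℓ δ z := by
    simp only [wP_eq ℓ δ hℓ hδ]
    exact (LL ℓ δ hℓ hδ).weierstrassP_add_coe z ⟨_, (LL ℓ δ hℓ hδ).ω₁_mem_lattice⟩
  have p2 : wP ℓ δ (z + 2 * (δ * Complex.I)) = wP ℓ δ z := by
    simp only [wP_eq ℓ δ hℓ hδ]
    exact (LL ℓ δ hℓ hδ).weierstrassP_add_coe z ⟨_, (LL ℓ δ hℓ hδ).ω₂_mem_lattice⟩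
  have leg : 2 * (δ * Complex.I) * (2 * wZeta ℓ δ ℓ) - 2 * ℓ * (2 * wZeta ℓ δ (δ * Complex.I))
      = 2 * Real.pi * Complex.I := by
    have hpos : 0 < ((LL ℓ δ hℓ hδ).ω₂ / (LL ℓ δ hℓ hδ).ω₁).im := by
      have : (LL ℓ δ hℓ hδ).ω₂ / (LL ℓ δ hℓ hδ).ω₁ = ((δ / ℓ : ℝ) : ℂ) * Complex.I := by
        simp only [LL]; push_cast; field_simp
      rw [this, Complex.im_ofReal_mul]
      simp only [Complex.I_im, mul_one]
      positivity
    have h := legendre (LL ℓ δ hℓ hδ) hpos z (by rwa [Lambda_eq ℓ δ hℓ hδ] at hz)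
    simp only [← wZeta_eq] at h
    have a1 := q1 z
    have a2 := q2 z
    simp only [LL] at h
    rw [a1, a2] at h
    linear_combination h
  have z1 : zeta2 ℓ δ (z + 2 * ℓ) = zeta2 ℓ δ z + Real.pi / δ := by
    simp only [zeta2, q1]
    field_simp
    linear_combination leg / 2
  have z2 : zeta2 ℓ δ (z + 2 * (δ * Complex.I)) = zeta2 ℓ δ z := by
    simp only [zeta2, q2]
    field_simp
    ring
  constructor
  · simp only [f2, wp2, z1, p1]; ring
  · simp only [f2, wp2, z2, p2]

end
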